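/- Failure of the convex Positivstellensatz for non-monic pencils: let L = [[x₂, x₁],[x₁, 0]] ∈ M₂(ℂ⟨x₁,x₂⟩), a hermitian pencil with zero constant term. Although x₁(X) ⪰ 0 for every tuple X in the free spectrahedron D_L, there do not exist finitely many s₁,…,s_M ∈ ℂ⟨x₁,x₂⟩ and v₁,…,v_N ∈ ℂ⟨x₁,x₂⟩^{2×1} such that x₁ = Σ_{i=1}^M sᵢ*sᵢ + Σ_{j=1}^N vⱼ*Lvⱼ in ℂ⟨x₁,x₂⟩. -/

import Mathlib

open scoped Kronecker Matrix ComplexOrder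

/-- Noncommutative polynomials: the free `ℂ`-algebra `ℂ⟨x₁,…,xₙ⟩` on `n` generators. -/
abbrev FreeAlg (n : ℕ) := FreeAlgebra ℂ (Fin n)

/-- Evaluation of a matrix of noncommutative polynomials at an `n`-tuple of `k × k` complex
matrices, i.e. the image under `id ⊗ ev_X`. -/
noncomputable def evalM {n k : ℕ} {I J : Type*} (f : Matrix I J (FreeAlg n))
    (X : Fin n → Matrix (Fin k) (Fin k) ℂ) : Matrix (I × Fin k) (J × Fin k) ℂ :=
  fun p q => FreeAlgebra.lift ℂ X (f p.1 q.1) p.2 q.2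

/-- The conjugate-linear involutive anti-automorphism on `ℂ⟨x⟩` fixing the generators:
reverse each word and conjugate each coefficient. -/
noncomputable def nstar {n : ℕ} (a : FreeAlg n) : FreeAlg n :=
  (FreeAlgebra.equivMonoidAlgebraFreeMonoid).symm
    (MonoidAlgebra.ofCoeff (Finsupp.mapDomain FreeMonoid.reverse
      (Finsupp.mapRange (starRingEnd ℂ) (map_zero _)
        ((FreeAlgebra.equivMonoidAlgebraFreeMonoid) a).coeff)))

/-- Conjugate-transpose of a matrix over `ℂ⟨x⟩`. -/
noncomputable def adjM {n : ℕ} {I J : Type*} (f : Matrix I J (FreeAlg n)) :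
    Matrix J I (FreeAlg n) :=
  fun i j => nstar (f j i)

/-- A matrix `f` over `ℂ⟨x⟩` is hermitian if `f = f*`. -/
def IsHermPoly {n : ℕ} {I : Type*} (f : Matrix I I (FreeAlg n)) : Prop :=
  ∀ i j, f i j = nstar (f j i)

/-- Evaluation `L(X) = A₀ ⊗ I + ∑ⱼ Aⱼ ⊗ Xⱼ` of a linear matrix pencil at a matrix tuple. -/
noncomputable def pencilK {n d k : ℕ} (A0 : Matrix (Fin d) (Fin d) ℂ)
    (A : Fin n → Matrix (Fin d) (Fin d) ℂ) (X : Fin n → Matrix (Fin k) (Fin k) ℂ) :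
    Matrix (Fin d × Fin k) (Fin d × Fin k) ℂ :=
  A0 ⊗ₖ (1 : Matrix (Fin k) (Fin k) ℂ) + ∑ j, A j ⊗ₖ X j

/-- Evaluation `L(X) = I ⊗ I + ∑ⱼ Aⱼ ⊗ Xⱼ` of a monic linear matrix pencil. -/
noncomputable def monicK {n d k : ℕ} (A : Fin n → Matrix (Fin d) (Fin d) ℂ)
    (X : Fin n → Matrix (Fin k) (Fin k) ℂ) : Matrix (Fin d × Fin k) (Fin d × Fin k) ℂ :=
  1 + ∑ j, A j ⊗ₖ X j

/-- The monic pencil `I + ∑ⱼ Aⱼ xⱼ` as a matrix of noncommutative polynomials. -/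
noncomputable def monicPoly {n e : ℕ} (A : Fin n → Matrix (Fin e) (Fin e) ℂ) :
    Matrix (Fin e) (Fin e) (FreeAlg n) :=
  1 + ∑ j, (A j).map (fun c => c • FreeAlgebra.ι ℂ j)

/-- The subspace of noncommutative polynomials of degree at most `δ`:
the `ℂ`-linear span of products of at most `δ` generators. -/
noncomputable def degLE (n δ : ℕ) : Submodule ℂ (FreeAlg n) :=
  Submodule.span ℂ
    {a | ∃ w : List (Fin n), w.length ≤ δ ∧ a = (w.map (FreeAlgebra.ι ℂ)).prod}

/-- A matrix over `ℂ⟨x⟩` has degree at most `δ` if each entry does. -/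
def matDegLE {n : ℕ} {I J : Type*} (f : Matrix I J (FreeAlg n)) (δ : ℕ) : Prop :=
  ∀ i j, f i j ∈ degLE n δ

/-- The degree of a matrix of noncommutative polynomials: the least `δ` such that every entry
lies in the span of words of length at most `δ`. -/
noncomputable def matDeg {n : ℕ} {I J : Type*} (f : Matrix I J (FreeAlg n)) : ℕ :=
  sInf {δ | matDegLE f δ}

/-- Evaluation of `f` at the zero scalar tuple, `f(0) ∈ M_d(ℂ)`. -/
noncomputable def evalZero {n : ℕ} {I J : Type*} (f : Matrix I J (FreeAlg n)) :
    Matrix I J ℂ :=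
  f.map (⇑(FreeAlgebra.lift ℂ (fun _ : Fin n => (0 : ℂ))))

/-- The hermitian pencil `L = [[x₂, x₁], [x₁, 0]]` with zero constant term. -/
noncomputable def Lbad : Matrix (Fin 2) (Fin 2) (FreeAlg 2) :=
  !![FreeAlgebra.ι ℂ (1 : Fin 2), FreeAlgebra.ι ℂ (0 : Fin 2);
     FreeAlgebra.ι ℂ (0 : Fin 2), 0]

/-! On matrix points, the zero corner of `L` forces `x₁ = 0` throughout `D_L`.

There is no certificate because of a point over the dual numbers `ℂ[ε]`, with the involution fixing
`ε`: the squares `s*s` and the values `v*L(ε, 1)v = v₁*v₁ + ε(v₁*v₂ + v₂*v₁)` all lie in the convex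
cone `{0} ∪ {a + bε | a > 0}`, since a `v₁` with zero standard part is a multiple of `ε` and
`ε² = 0`. As `(ε, 1)` is a self-adjoint point, a certificate would place the value `ε` of `x₁` in
this cone. -/

theorem posSemidef_apply_eq_zero_of_diag_eq_zero {𝕜 ι : Type*} [RCLike 𝕜]
    {A : Matrix ι ι 𝕜} (hA : A.PosSemidef) {j : ι} (hj : A j j = 0) (i : ι) : A i j = 0 := by
  have hker : A.submatrix ![i, j] ![i, j] *ᵥ ![0, 1] = 0 :=
    ((hA.submatrix ![i, j]).dotProduct_mulVec_zero_iff _).mp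
      (by simp [Matrix.mulVec, dotProduct, hj])
  simpa [Matrix.mulVec, dotProduct] using congrFun hker 0

theorem eq_zero_of_posSemidef_evalM_Lbad {k : ℕ} {X : Fin 2 → Matrix (Fin k) (Fin k) ℂ}
    (hL : (evalM Lbad X).PosSemidef) : X 0 = 0 := by
  ext p q
  have hcorner : evalM Lbad X (1, q) (1, q) = 0 := by simp [evalM, Lbad]
  simpa [evalM, Lbad] using posSemidef_apply_eq_zero_of_diag_eq_zero hL hcorner (0, p)

section Involution

open FreeAlgebra

variable {n : ℕ}

theorem nstar_add (a b : FreeAlg n) : nstar (a + b) = nstar a + nstar b := by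
  simp only [nstar, map_add, MonoidAlgebra.coeff_add]
  rw [Finsupp.mapRange_add (map_add _), Finsupp.mapDomain_add, MonoidAlgebra.ofCoeff_add, map_add]

theorem nstar_symm_single (w : FreeMonoid (Fin n)) (c : ℂ) :
    nstar (equivMonoidAlgebraFreeMonoid.symm (MonoidAlgebra.single w c)) =
      equivMonoidAlgebraFreeMonoid.symm (MonoidAlgebra.single w.reverse (star c)) := by
  simp [nstar, Finsupp.mapDomain_single]

theorem freeMonoidLift_reverse {α M : Type*} [Monoid M] [StarMul M] {f : α → M}
    (hf : ∀ a, IsSelfAdjoint (f a)) (w : FreeMonoid α) :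
    FreeMonoid.lift f w.reverse = star (FreeMonoid.lift f w) := by
  induction w using FreeMonoid.inductionOn' with
  | one => exact (star_one M).symm
  | of_mul a w ih => simp [FreeMonoid.reverse_mul, ih, (hf a).star_eq]

theorem lift_symm_single {R X A : Type*} [CommSemiring R] [Semiring A] [Algebra R A] (f : X → A)
    (w : FreeMonoid X) (c : R) :
    lift R f (equivMonoidAlgebraFreeMonoid.symm (MonoidAlgebra.single w c)) =
      c • FreeMonoid.lift f w := by
  have hcomp : (lift R f).comp (equivMonoidAlgebraFreeMonoid (R := R) (X := X)).symm.toAlgHom =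
      MonoidAlgebra.lift R A (FreeMonoid X) (FreeMonoid.lift f) :=
    MonoidAlgebra.algHom_ext' (by ext; simp [equivMonoidAlgebraFreeMonoid]) (by ext)
  simpa using DFunLike.congr_fun hcomp (MonoidAlgebra.single w c)

variable {A : Type*} [Semiring A] [StarRing A] [Algebra ℂ A] [StarModule ℂ A] {X : Fin n → A}

theorem lift_nstar (hX : ∀ j, IsSelfAdjoint (X j)) (a : FreeAlg n) :
    lift ℂ X (nstar a) = star (lift ℂ X a) := by
  obtain ⟨f, rfl⟩ := equivMonoidAlgebraFreeMonoid.symm.surjective a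
  induction f using MonoidAlgebra.induction_linear with
  | zero => simp [nstar]
  | add f g hf hg => simp only [map_add, nstar_add, hf, hg, star_add]
  | single w c =>
    rw [nstar_symm_single, lift_symm_single, lift_symm_single, freeMonoidLift_reverse hX,
      star_smul]

theorem adjM_map_lift (hX : ∀ j, IsSelfAdjoint (X j)) {I J : Type*}
    (f : Matrix I J (FreeAlg n)) : (adjM f).map (lift ℂ X) = (f.map (lift ℂ X))ᴴ := by
  ext i j
  exact lift_nstar hX (f j i)

end Involution

section DualNumber

open scoped DualNumber

variable {R : Type*}

section StarRing

variable [CommSemiring R] [StarRing R]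

/-- The involution `(a + bε)* = a* + b*ε` on the dual numbers, for which `ε` is self-adjoint. -/
instance dualNumberStarRing : StarRing R[ε] where
  star z := TrivSqZeroExt.inl (star z.fst) + TrivSqZeroExt.inr (star z.snd)
  star_involutive z := by ext <;> simp
  star_mul z w := by ext <;> simp [mul_comm, add_comm]
  star_add z w := by ext <;> simp

theorem fst_star (z : R[ε]) : (star z).fst = star z.fst := by
  simp [star]

theorem snd_star (z : R[ε]) : (star z).snd = star z.snd := by
  simp [star]

instance dualNumberStarModule {S : Type*} [Star S] [SMul S R] [StarModule S R] :
    StarModule S R[ε] where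
  star_smul c z := by ext <;> simp [fst_star, snd_star]

theorem isSelfAdjoint_eps : IsSelfAdjoint (ε : R[ε]) := by
  ext <;> simp [fst_star, snd_star]

end StarRing

section Cone

/-- The convex cone `{0} ∪ {a + bε | a > 0}` in the dual numbers, which contains no nonzero
infinitesimal. -/
def dualNumberCone (R : Type*) [AddCommMonoid R] [PartialOrder R] [IsOrderedCancelAddMonoid R] :
    AddSubmonoid R[ε] where
  carrier := {z | z = 0 ∨ 0 < z.fst}
  zero_mem' := Or.inl rfl
  add_mem' := by
    rintro z w (rfl | hz) (rfl | hw)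
    · simp
    · simp [hw]
    · simp [hz]
    · exact Or.inr (add_pos hz hw)

theorem eps_notMem_dualNumberCone [Semiring R] [Nontrivial R] [PartialOrder R]
    [IsOrderedCancelAddMonoid R] : ε ∉ dualNumberCone R := by
  rintro (h | h)
  · simpa using congrArg TrivSqZeroExt.snd h
  · simp at h

variable [CommRing R] [IsDomain R] [StarRing R] [PartialOrder R] [StarOrderedRing R]

theorem star_mul_self_add_eps_mul_mem_dualNumberCone (a b : R[ε]) :
    star a * a + ε * (star a * b + star b * a) ∈ dualNumberCone R := by
  rcases eq_or_ne a.fst 0 with ha | ha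
  · left
    ext <;> simp [fst_star, ha]
  · right
    simpa [fst_star] using star_mul_self_pos (IsRegular.of_ne_zero ha)

theorem star_mul_self_mem_dualNumberCone (a : R[ε]) : star a * a ∈ dualNumberCone R := by
  simpa using star_mul_self_add_eps_mul_mem_dualNumberCone a 0

theorem conjTranspose_mul_mul_mem_dualNumberCone {J : Type*} (v : Matrix (Fin 2) J R[ε]) (j : J) :
    (vᴴ * (!![1, ε; ε, 0] : Matrix (Fin 2) (Fin 2) R[ε]) * v) j j ∈ dualNumberCone R := by
  convert star_mul_self_add_eps_mul_mem_dualNumberCone (v 0 j) (v 1 j) using 1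
  simp only [Matrix.mul_apply, Matrix.conjTranspose_apply, Matrix.of_apply, Matrix.cons_val',
    Matrix.cons_val_fin_one, Fin.sum_univ_two, Matrix.cons_val_zero, Matrix.cons_val_one, mul_one,
    mul_zero, add_zero]
  ring

end Cone

/-- The point `(ε, 1)` over the dual numbers, at which a certificate for `x₁` fails. -/
def dualPoint : Fin 2 → ℂ[ε] := ![ε, 1]

theorem isSelfAdjoint_dualPoint (j : Fin 2) : IsSelfAdjoint (dualPoint j) := by
  fin_cases j
  · exact isSelfAdjoint_eps
  · exact IsSelfAdjoint.one _

theorem Lbad_map_lift_dualPoint :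
    Lbad.map (FreeAlgebra.lift ℂ dualPoint) = !![1, ε; ε, 0] := by
  ext i j : 1
  fin_cases i <;> fin_cases j <;> simp [Lbad, dualPoint]

theorem lift_nstar_mul_self_mem_dualNumberCone (s : FreeAlg 2) :
    FreeAlgebra.lift ℂ dualPoint (nstar s * s) ∈ dualNumberCone ℂ := by
  rw [map_mul, lift_nstar isSelfAdjoint_dualPoint]
  exact star_mul_self_mem_dualNumberCone _

theorem lift_adjM_mul_Lbad_mul_mem_dualNumberCone {J : Type*} (v : Matrix (Fin 2) J (FreeAlg 2))
    (j : J) : FreeAlgebra.lift ℂ dualPoint ((adjM v * Lbad * v) j j) ∈ dualNumberCone ℂ := by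
  rw [← Matrix.map_apply (f := FreeAlgebra.lift ℂ dualPoint), Matrix.map_mul, Matrix.map_mul,
    adjM_map_lift isSelfAdjoint_dualPoint, Lbad_map_lift_dualPoint]
  exact conjTranspose_mul_mul_mem_dualNumberCone _ j

end DualNumber

/-- failure of the convex Positivstellensatz for non-monic pencils: although
`x₁ ⪰ 0` on `D_L` for `L = [[x₂, x₁], [x₁, 0]]`, there is no certificate
`x₁ = ∑ᵢ sᵢ*sᵢ + ∑ⱼ vⱼ*Lvⱼ`. -/
theorem no_positivstellensatz_for_nonmonic_pencil :
    (∀ (k : ℕ) (X : Fin 2 → Matrix (Fin k) (Fin k) ℂ), (∀ j, (X j).IsHermitian) →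
      (evalM Lbad X).PosSemidef → (X 0).PosSemidef) ∧
    ¬ ∃ (M N : ℕ) (s : Fin M → FreeAlg 2) (v : Fin N → Matrix (Fin 2) (Fin 1) (FreeAlg 2)),
      FreeAlgebra.ι ℂ (0 : Fin 2) =
        ∑ i, nstar (s i) * s i + ∑ j, (adjM (v j) * Lbad * v j) 0 0 := by
  refine ⟨fun k X _ hL => eq_zero_of_posSemidef_evalM_Lbad hL ▸ Matrix.PosSemidef.zero, ?_⟩
  rintro ⟨M, N, s, v, hcert⟩
  have hx₁ : FreeAlgebra.lift ℂ dualPoint (FreeAlgebra.ι ℂ 0) = DualNumber.eps := by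
    simp [dualPoint]
  refine eps_notMem_dualNumberCone (R := ℂ) ?_
  rw [← hx₁, hcert, map_add, map_sum, map_sum]
  exact add_mem (sum_mem fun i _ => lift_nstar_mul_self_mem_dualNumberCone (s i))
    (sum_mem fun j _ => lift_adjM_mul_Lbad_mul_mem_dualNumberCone (v j) 0)
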